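/- Let m ≥ 2 be an even integer and define θ_{A_m}(τ, z₁,…,z_m) := θ(τ,z₁)·…·θ(τ,z_m)·θ(τ, z₁+⋯+z_m) on ℍ × ℂᵐ. Then θ_{A_m} is a holomorphic Jacobi form of weight (m+1)/2 and index 1 for the lattice A_m (realized as ℤᵐ with Gram matrix S = I_m + J_m, where J_m is the all-ones m×m matrix) with multiplier system v_η^{3m+3}. It is a Jacobi cusp form of critical weight: writing its Fourier expansion as θ_{A_m}(τ,z) = Σ c(n,r)·exp(2πi(nτ + r₁z₁ + ⋯ + r_mz_m)) over n ∈ ℚ, n ≥ 0 and r ∈ (1/2)ℤᵐ, one has min{2n − rᵀ(I_m+J_m)^{−1}r : c(n,r) ≠ 0} = 1/(4(m+1)) > 0. -/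

import Mathlib

open Complex Matrix
open scoped Real BigOperators Classical

noncomputable section

abbrev SL2Z := Matrix.SpecialLinearGroup (Fin 2) ℤ

/-- The integral bilinear form attached to a Gram matrix `S`. -/
def bilinZ {ι : Type*} [Fintype ι] (S : Matrix ι ι ℤ) (x y : ι → ℤ) : ℤ :=
  ∑ i, ∑ j, x i * S i j * y j

def bilinQ {ι : Type*} [Fintype ι] (S : Matrix ι ι ℤ) (x y : ι → ℚ) : ℚ :=
  ∑ i, ∑ j, x i * (S i j : ℚ) * y j

def bilinR {ι : Type*} [Fintype ι] (S : Matrix ι ι ℤ) (x y : ι → ℝ) : ℝ :=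
  ∑ i, ∑ j, x i * (S i j : ℝ) * y j

def bilinC {ι : Type*} [Fintype ι] (S : Matrix ι ι ℤ) (x y : ι → ℂ) : ℂ :=
  ∑ i, ∑ j, x i * (S i j : ℂ) * y j

/-- `S` is the Gram matrix of an even positive definite lattice. -/
structure IsEvenPosDef {ι : Type*} [Fintype ι] (S : Matrix ι ι ℤ) : Prop where
  symm : S.IsSymm
  posdef : ∀ x : ι → ℚ, x ≠ 0 → 0 < bilinQ S x x
  even_diag : ∀ i, (2 : ℤ) ∣ S i i

/-- `l ∈ (1/2) L^∨`, written in lattice coordinates:  `2(l,x) ∈ ℤ` for every lattice vector. -/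
def InHalfDual {ι : Type*} [Fintype ι] (S : Matrix ι ι ℤ) (l : ι → ℚ) : Prop :=
  ∀ x : ι → ℤ, ∃ m : ℤ, 2 * bilinQ S l (fun i => (x i : ℚ)) = m

/-- `φ` is a holomorphic Jacobi form of weight `k` and index `t` for the lattice `(ℤ^ι, S)`
with `SL₂(ℤ)`-character (multiplier system) `χ`, Heisenberg character `ν`,
and Fourier coefficients `f`. -/
structure IsJacobiForm {ι : Type*} [Fintype ι] (S : Matrix ι ι ℤ) (k t : ℚ)
    (χ : SL2Z → ℂ) (ν : (ι → ℤ) → (ι → ℤ) → ℂ)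
    (f : ℚ × (ι → ℚ) → ℂ) (φ : ℂ → (ι → ℂ) → ℂ) : Prop where
  holo : DifferentiableOn ℂ (fun p : ℂ × (ι → ℂ) => φ p.1 p.2) {p | 0 < p.1.im}
  modular : ∀ A : SL2Z, ∀ τ : ℂ, 0 < τ.im → ∀ z : ι → ℂ,
    φ (((A.1 0 0 : ℂ) * τ + (A.1 0 1 : ℂ)) / ((A.1 1 0 : ℂ) * τ + (A.1 1 1 : ℂ)))
        (fun i => z i / ((A.1 1 0 : ℂ) * τ + (A.1 1 1 : ℂ)))
      = χ A * ((A.1 1 0 : ℂ) * τ + (A.1 1 1 : ℂ)) ^ (k : ℂ)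
        * Complex.exp ((π : ℂ) * I * (t : ℂ) * (A.1 1 0 : ℂ) * bilinC S z z
            / ((A.1 1 0 : ℂ) * τ + (A.1 1 1 : ℂ)))
        * φ τ z
  elliptic : ∀ x y : ι → ℤ, ∀ τ : ℂ, 0 < τ.im → ∀ z : ι → ℂ,
    φ τ (fun i => z i + (x i : ℂ) * τ + (y i : ℂ))
      = ν x y * Complex.exp (-((π : ℂ) * I * (t : ℂ))
            * ((bilinZ S x x : ℂ) * τ + 2 * bilinC S (fun i => (x i : ℂ)) z))
        * φ τ z
  support : ∀ p : ℚ × (ι → ℚ), f p ≠ 0 →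
    0 ≤ p.1 ∧ InHalfDual S p.2 ∧ 0 ≤ 2 * p.1 * t - bilinQ S p.2 p.2
  expansion : ∀ τ : ℂ, 0 < τ.im → ∀ z : ι → ℂ,
    HasSum (fun p : ℚ × (ι → ℚ) =>
        f p * Complex.exp (2 * (π : ℂ) * I *
          ((p.1 : ℂ) * τ + bilinC S (fun i => (p.2 i : ℂ)) z))) (φ τ z)

/-- The Fourier coefficients `f` are supported on indices of positive hyperbolic norm
(cusp form condition). -/
def IsCuspSupport {ι : Type*} [Fintype ι] (S : Matrix ι ι ℤ) (t : ℚ)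
    (f : ℚ × (ι → ℚ) → ℂ) : Prop :=
  ∀ p : ℚ × (ι → ℚ), f p ≠ 0 → 0 < 2 * p.1 * t - bilinQ S p.2 p.2

/-- `c` is a root of unity. -/
def HasFiniteOrder (c : ℂ) : Prop := ∃ N : ℕ, 0 < N ∧ c ^ N = 1

/-- The quadratic character mod 4. -/
def chi4 (n : ℤ) : ℂ := if n % 4 = 1 then 1 else if n % 4 = 3 then -1 else 0

/-- The classical Jacobi theta-series of characteristic `(1/2,1/2)`. -/
def jtheta (τ z : ℂ) : ℂ :=
  ∑' n : ℤ, chi4 n *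
    Complex.exp (2 * (π : ℂ) * I * (((n : ℂ) ^ 2 * τ) / 8 + (n : ℂ) * z / 2))

/-- The Dedekind eta function. -/
def dedekindEta (τ : ℂ) : ℂ :=
  Complex.exp ((π : ℂ) * I * τ / 12) *
    ∏' n : ℕ, (1 - Complex.exp (2 * (π : ℂ) * I * ((n : ℂ) + 1) * τ))

/-- Gram matrix `I_m + J_m` of the root lattice `A_m` (in the realization of the statement). -/
def AmGram (m : ℕ) : Matrix (Fin m) (Fin m) ℤ :=
  Matrix.of fun i j => if i = j then 2 else 1

/-- `θ_{A_m}(τ,z) = θ(τ,z₁)⋯θ(τ,z_m)·θ(τ,z₁+⋯+z_m)`. -/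
def thetaAm (m : ℕ) : ℂ → (Fin m → ℂ) → ℂ :=
  fun τ z => (∏ i, jtheta τ (z i)) * jtheta τ (∑ i, z i)

/-!
The map `x ↦ (x₁, …, x_m, x₁ + ⋯ + x_m)` embeds `A_m` isometrically in `ℤ^(m+1)`, as the orthogonal
complement of `u = (1, …, 1, -1)`, and `θ_{A_m}` is the pullback of `∏ θ(τ, w_j)`. So the
transformation laws reduce to those of `θ`, and `θ / η³` has trivial multiplier: it transforms under
`S` and `T`, hence under `SL₂(ℤ)`, like a Jacobi form of weight `-1`.

The terms of the theta series of `ℤ^(m+1)` are indexed by vectors `n` with odd entries. Projecting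
`n / 2` orthogonally to `A_m ⊗ ℚ` loses the component along `u`, so the hyperbolic norm of the
resulting Fourier index is `(u · n)² / (4 (m + 1))`. For even `m` the integer `u · n` is a sum of an
odd number of odd integers, hence nonzero. The vector `n = (1, …, 1, m - 1)` has `u · n = 1`, and no
other vector has the same Fourier index: two such vectors differ by an integral multiple of `u`, so
their products with `u`, which can only be `±1`, are congruent modulo `m + 1`.
-/

section CharacterAndTheta

lemma chi4_eq_zero_of_even {n : ℤ} (hn : Even n) : chi4 n = 0 := by
  obtain ⟨k, rfl⟩ := hn
  rw [chi4, if_neg (by omega), if_neg (by omega)]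

lemma chi4_ne_zero_iff_odd {n : ℤ} : chi4 n ≠ 0 ↔ Odd n := by
  refine ⟨fun h => Int.not_even_iff_odd.mp (mt chi4_eq_zero_of_even h), fun h => ?_⟩
  have h : n % 4 = 1 ∨ n % 4 = 3 := by have := Int.odd_iff.mp h; omega
  rcases h with h | h <;> simp [chi4, h]

lemma chi4_add_two (n : ℤ) : chi4 (n + 2) = -chi4 n := by
  have h : n % 4 = 0 ∨ n % 4 = 1 ∨ n % 4 = 2 ∨ n % 4 = 3 := by omega
  rcases h with h | h | h | h <;> simp [chi4, Int.add_emod, h]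

lemma chi4_add_two_mul (n x : ℤ) : chi4 (n + 2 * x) = cexp (x * (π * I)) * chi4 n := by
  rw [exp_int_mul, exp_pi_mul_I]
  induction x with
  | zero => simp
  | succ x ih =>
    rw [mul_add, mul_one, ← add_assoc, chi4_add_two, ih, zpow_add_one₀ (by simp)]
    ring
  | pred x ih =>
    rw [← neg_inj, ← chi4_add_two, zpow_sub_one₀ (by simp)]
    rw [show n + 2 * (-(x : ℤ) - 1) + 2 = n + 2 * -x by ring, ih]
    norm_num

lemma jtheta_term_two_mul_add_one (τ z : ℂ) (k : ℤ) :
    chi4 (2 * k + 1) * cexp (2 * π * I *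
        (((2 * k + 1 : ℤ) : ℂ) ^ 2 * τ / 8 + ((2 * k + 1 : ℤ) : ℂ) * z / 2)) =
      cexp (π * I * τ / 4 + π * I * z) * jacobiTheta₂_term k (z + τ / 2 + 1 / 2) τ := by
  have hchi : chi4 (2 * k + 1) = cexp (k * (π * I)) := by
    rw [add_comm, chi4_add_two_mul, show chi4 1 = 1 by simp [chi4], mul_one]
  rw [hchi, jacobiTheta₂_term, ← Complex.exp_add, ← Complex.exp_add]
  push_cast
  ring_nf

lemma hasSum_jtheta_term_eq_jacobiTheta₂ {τ : ℂ} (hτ : 0 < τ.im) (z : ℂ) :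
    HasSum (fun n : ℤ => chi4 n * cexp (2 * π * I * ((n : ℂ) ^ 2 * τ / 8 + (n : ℂ) * z / 2)))
      (cexp (π * I * τ / 4 + π * I * z) * jacobiTheta₂ (z + τ / 2 + 1 / 2) τ) := by
  have hinj : Function.Injective (fun k : ℤ => 2 * k + 1) := fun a b h => by
    simpa using h
  rw [← hinj.hasSum_iff fun n hn => ?_]
  · exact ((hasSum_jacobiTheta₂_term _ hτ).mul_left _).congr_fun
      (jtheta_term_two_mul_add_one τ z)
  · have : Even n := Int.not_odd_iff_even.mp fun ⟨k, hk⟩ => hn ⟨k, hk.symm⟩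
    rw [chi4_eq_zero_of_even this, zero_mul]

lemma jtheta_eq_jacobiTheta₂ {τ : ℂ} (hτ : 0 < τ.im) (z : ℂ) :
    jtheta τ z = cexp (π * I * τ / 4 + π * I * z) * jacobiTheta₂ (z + τ / 2 + 1 / 2) τ :=
  (hasSum_jtheta_term_eq_jacobiTheta₂ hτ z).tsum_eq

lemma hasSum_jtheta {τ : ℂ} (hτ : 0 < τ.im) (z : ℂ) :
    HasSum (fun n : ℤ => chi4 n * cexp (2 * π * I * ((n : ℂ) ^ 2 * τ / 8 + (n : ℂ) * z / 2)))
      (jtheta τ z) :=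
  (hasSum_jtheta_term_eq_jacobiTheta₂ hτ z).summable.hasSum

lemma differentiableAt_jtheta {p : ℂ × ℂ} (hp : 0 < p.1.im) :
    DifferentiableAt ℂ (fun p : ℂ × ℂ => jtheta p.1 p.2) p := by
  have heq : (fun p : ℂ × ℂ => jtheta p.1 p.2) =ᶠ[nhds p] fun p =>
      cexp (π * I * p.1 / 4 + π * I * p.2) * jacobiTheta₂ (p.2 + p.1 / 2 + 1 / 2) p.1 := by
    have hopen : IsOpen {p : ℂ × ℂ | 0 < p.1.im} :=
      isOpen_lt continuous_const (continuous_im.comp continuous_fst)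
    filter_upwards [hopen.mem_nhds hp] with q hq using jtheta_eq_jacobiTheta₂ hq _
  have hθ := (hasFDerivAt_jacobiTheta₂ (p.2 + p.1 / 2 + 1 / 2) hp).differentiableAt
  refine DifferentiableAt.congr_of_eventuallyEq (.mul (by fun_prop) ?_) heq
  exact hθ.comp (f := fun p : ℂ × ℂ => (p.2 + p.1 / 2 + 1 / 2, p.1)) p (by fun_prop)

lemma jtheta_add_period (τ z : ℂ) (x y : ℤ) :
    jtheta τ (z + x * τ + y) =
      cexp (π * I * (x + y) - π * I * ((x : ℂ) ^ 2 * τ + 2 * x * z)) * jtheta τ z := by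
  rw [jtheta, jtheta, ← tsum_mul_left]
  conv_rhs => rw [← (Equiv.addRight (2 * x)).tsum_eq]
  refine tsum_congr fun n => ?_
  rw [Equiv.coe_addRight, chi4_add_two_mul]
  by_cases hn : chi4 n = 0
  · simp [hn]
  obtain ⟨k, rfl⟩ := chi4_ne_zero_iff_odd.mp hn
  rw [mul_right_comm (cexp _), mul_comm (chi4 _), ← mul_assoc, ← Complex.exp_add,
    ← Complex.exp_add]
  congr 1
  refine exp_eq_exp_iff_exists_int.mpr ⟨k * y - x, ?_⟩
  push_cast
  ring

lemma jtheta_add_one (τ z : ℂ) : jtheta (τ + 1) z = cexp (π * I / 4) * jtheta τ z := by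
  rw [jtheta, jtheta, ← tsum_mul_left]
  refine tsum_congr fun n => ?_
  by_cases hn : chi4 n = 0
  · simp [hn]
  obtain ⟨k, rfl⟩ := chi4_ne_zero_iff_odd.mp hn
  obtain ⟨l, hl⟩ := Int.even_mul_succ_self k
  have hl' : (k : ℂ) * (k + 1) = l + l := mod_cast hl
  rw [mul_left_comm, ← Complex.exp_add]
  congr 1
  refine exp_eq_exp_iff_exists_int.mpr ⟨l, ?_⟩
  push_cast
  linear_combination (π * I) * hl'

lemma jtheta_neg_one_div {τ : ℂ} (hτ : 0 < τ.im) (z : ℂ) :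
    jtheta (-1 / τ) (z / τ) =
      -I * (-I * τ) ^ (1 / 2 : ℂ) * cexp (π * I * z ^ 2 / τ) * jtheta τ z := by
  have hτ₀ : τ ≠ 0 := by rintro rfl; simp at hτ
  have hS : 0 < (-1 / τ).im := by
    rw [neg_div, neg_im, one_div, inv_im, neg_div, neg_neg]
    exact div_pos hτ (normSq_pos.mpr hτ₀)
  have hsqrt : (-I * τ) ^ (1 / 2 : ℂ) ≠ 0 := by simp [cpow_eq_zero_iff, hτ₀]
  have hexp : cexp (π * I * (-1 / τ) / 4 + π * I * (z / τ)) =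
      -I * cexp (π * I * z ^ 2 / τ) * cexp (π * I * τ / 4 + π * I * z) *
        cexp (-π * I * (z + τ / 2 - 1 / 2) ^ 2 / τ) := by
    rw [← exp_neg_pi_div_two_mul_I, ← Complex.exp_add, ← Complex.exp_add, ← Complex.exp_add]
    congr 1
    field_simp
    ring
  have hshift : jacobiTheta₂ (z + τ / 2 + 1 / 2) τ = jacobiTheta₂ (z + τ / 2 - 1 / 2) τ := by
    rw [← jacobiTheta₂_add_left (z + τ / 2 - 1 / 2)]
    ring_nf
  have harg : z / τ + -1 / τ / 2 + 1 / 2 = (z + τ / 2 - 1 / 2) / τ := by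
    field_simp
    ring
  rw [jtheta_eq_jacobiTheta₂ hS, jtheta_eq_jacobiTheta₂ hτ, hshift, harg,
    jacobiTheta₂_functional_equation (z + τ / 2 - 1 / 2) τ, hexp]
  field_simp [hsqrt]

end CharacterAndTheta

section Eta

lemma dedekindEta_eq_eta : dedekindEta = ModularForm.eta := by
  funext τ
  simp only [dedekindEta, ModularForm.eta, ModularForm.eta_q_eq_cexp, Function.Periodic.qParam]
  push_cast
  ring_nf

lemma dedekindEta_ne_zero {τ : ℂ} (hτ : 0 < τ.im) : dedekindEta τ ≠ 0 := by
  rw [dedekindEta_eq_eta]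
  exact ModularForm.eta_ne_zero hτ

lemma dedekindEta_add_one (τ : ℂ) : dedekindEta (τ + 1) = cexp (π * I / 12) * dedekindEta τ := by
  have hfactor (n : ℕ) : cexp (2 * π * I * (n + 1) * (τ + 1)) = cexp (2 * π * I * (n + 1) * τ) :=
    exp_eq_exp_iff_exists_int.mpr ⟨n + 1, by push_cast; ring⟩
  simp only [dedekindEta, hfactor]
  rw [← mul_assoc, ← Complex.exp_add]
  ring_nf

lemma I_cpow_half_mul_cpow_half {τ : ℂ} (hτ : 0 < τ.im) :
    I ^ (2⁻¹ : ℂ) * (-I * τ) ^ (2⁻¹ : ℂ) = τ ^ (2⁻¹ : ℂ) := by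
  have hτ₀ : τ ≠ 0 := by rintro rfl; simp at hτ
  have h₀ : -I * τ ≠ 0 := mul_ne_zero (neg_ne_zero.mpr I_ne_zero) hτ₀
  have harg : |arg (-I * τ)| < π / 2 := abs_arg_lt_pi_div_two_iff.mpr (Or.inl (by simpa using hτ))
  have hlog : log τ = log I + log (-I * τ) := by
    rw [← Complex.log_mul I_ne_zero h₀ ?_]
    · rw [← mul_assoc, mul_neg, I_mul_I, neg_neg, one_mul]
    · rw [arg_I]
      constructor <;> linarith [abs_lt.mp harg, Real.pi_pos]
  rw [cpow_def_of_ne_zero I_ne_zero, cpow_def_of_ne_zero h₀, cpow_def_of_ne_zero hτ₀, hlog,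
    ← Complex.exp_add, add_mul]

lemma dedekindEta_neg_one_div {τ : ℂ} (hτ : 0 < τ.im) :
    dedekindEta (-1 / τ) = (-I * τ) ^ (1 / 2 : ℂ) * dedekindEta τ := by
  have hη := ModularForm.eta_comp_eq_csqrt_I_inv hτ
  simp only [Function.comp_apply, Pi.smul_apply, Pi.mul_apply, smul_eq_mul, Complex.sqrt] at hη
  have hI : I ^ (2⁻¹ : ℂ) ≠ 0 := by simp [cpow_eq_zero_iff]
  rw [dedekindEta_eq_eta, hη, ← I_cpow_half_mul_cpow_half hτ, one_div]
  field_simp [hI]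

end Eta

section JacobiCocycle

open UpperHalfPlane hiding I
open ModularGroup (S T)

lemma denom_SL2Z_mul (A B : SL2Z) (τ : ℍ) :
    denom (A * B :) τ = denom A (B • τ : ℍ) * denom B τ := by
  have hB : σ (B : GL (Fin 2) ℝ) = ContinuousAlgEquiv.refl ℝ ℂ := by
    simp [σ]
  rw [map_mul, map_mul, denom_cocycle_σ, hB, ModularGroup.sl_moeb]
  rfl

/-- The automorphy factor of Jacobi forms of weight `k` and scalar index `t` (the exponential has
`t` where the usual convention for the classical index `t` has `2t`). -/
def jacobiFactor (k : ℤ) (t : ℂ) (A : SL2Z) (τ : ℍ) (z : ℂ) : ℂ :=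
  denom A τ ^ k * cexp (π * I * t * (A.1 1 0 * z ^ 2 / denom A τ))

lemma jacobiFactor_one (k : ℤ) (t : ℂ) (τ : ℍ) (z : ℂ) : jacobiFactor k t 1 τ z = 1 := by
  simp [jacobiFactor]

lemma lower_left_SL2Z_mul (A B : SL2Z) (τ : ℍ) :
    ((A * B).1 1 0 : ℂ) * denom B τ = A.1 1 0 + B.1 1 0 * denom (A * B :) τ := by
  have hdet : (B.1 0 0 * B.1 1 1 - B.1 0 1 * B.1 1 0 : ℂ) = 1 := by
    exact_mod_cast (det_fin_two B.1).symm.trans B.2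
  have hmul (i j : Fin 2) : (A * B).1 i j = A.1 i 0 * B.1 0 j + A.1 i 1 * B.1 1 j := by
    simp [mul_apply, Fin.sum_univ_two]
  have hAB : denom (A * B :) τ = (A * B).1 1 0 * τ + (A * B).1 1 1 := rfl
  rw [hAB, ModularGroup.denom_apply, hmul, hmul]
  push_cast
  linear_combination (A.1 1 0 : ℂ) * hdet

lemma jacobiFactor_mul (k : ℤ) (t : ℂ) (A B : SL2Z) (τ : ℍ) (z : ℂ) :
    jacobiFactor k t (A * B) τ z =
      jacobiFactor k t A (B • τ) (z / denom B τ) * jacobiFactor k t B τ z := by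
  have hA := denom_ne_zero A (B • τ)
  have hB := denom_ne_zero B τ
  have hc := lower_left_SL2Z_mul A B τ
  rw [denom_SL2Z_mul] at hc
  have hexp : (A * B).1 1 0 * z ^ 2 / (denom A (B • τ : ℍ) * denom B τ) =
      A.1 1 0 * (z / denom B τ) ^ 2 / denom A (B • τ : ℍ) + B.1 1 0 * z ^ 2 / denom B τ := by
    field_simp
    linear_combination z ^ 2 * hc
  simp only [jacobiFactor, denom_SL2Z_mul, hexp, mul_zpow, mul_add, Complex.exp_add]
  ring

/-- The subgroup of those `A` under which `F` transforms like a Jacobi form of weight `k` and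
scalar index `t`. -/
def jacobiStabilizer (k : ℤ) (t : ℂ) (F : ℍ → ℂ → ℂ) : Subgroup SL2Z where
  carrier := {A | ∀ τ z, F (A • τ) (z / denom A τ) = jacobiFactor k t A τ z * F τ z}
  one_mem' τ z := by simp [jacobiFactor_one]
  mul_mem' {A B} hA hB τ z := by
    rw [jacobiFactor_mul, mul_assoc, ← hB, ← hA, mul_smul, denom_SL2Z_mul, div_div,
      mul_comm (denom B τ)]
  inv_mem' {A} hA τ z := by
    have hF := hA (A⁻¹ • τ) (z / denom (A⁻¹ :) τ)
    have hfactor := jacobiFactor_mul k t A A⁻¹ τ z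
    rw [div_div, mul_comm (denom (A⁻¹ :) τ), ← denom_SL2Z_mul, smul_inv_smul, mul_inv_cancel] at hF
    rw [mul_inv_cancel, jacobiFactor_one] at hfactor
    rw [map_one, map_one, denom_one, div_one] at hF
    rw [hF, ← mul_assoc, mul_comm (jacobiFactor _ _ A⁻¹ _ _), ← hfactor, one_mul]

/-- The quotient `θ / η³`, in which the multiplier system of `θ` cancels. -/
def thetaEtaQuotient (τ : ℍ) (z : ℂ) : ℂ :=
  jtheta τ z / dedekindEta τ ^ 3

lemma S_mem_jacobiStabilizer_thetaEtaQuotient : S ∈ jacobiStabilizer (-1) 1 thetaEtaQuotient := by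
  intro τ z
  have hsqrt : (-I * τ) ^ (1 / 2 : ℂ) ≠ 0 := by simp [cpow_eq_zero_iff, τ.ne_zero]
  have hsq : ((-I * τ) ^ (1 / 2 : ℂ)) ^ 2 = -I * τ := by
    rw [one_div]
    exact_mod_cast cpow_nat_inv_pow (-I * τ) two_ne_zero
  have hS : ((S • τ : ℍ) : ℂ) = -1 / τ := by
    rw [modular_S_smul, coe_mk, inv_neg, neg_div, one_div]
  rw [thetaEtaQuotient, thetaEtaQuotient, jacobiFactor, ModularGroup.denom_S, hS,
    jtheta_neg_one_div τ.im_pos, dedekindEta_neg_one_div τ.im_pos]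
  have hc : S.1 1 0 = 1 := by simp [ModularGroup.S]
  rw [hc, mul_pow, pow_succ _ 2, hsq, Int.cast_one, one_mul, mul_one, ← mul_div_assoc,
    _root_.zpow_neg_one]
  field_simp [hsqrt, τ.ne_zero]

lemma T_mem_jacobiStabilizer_thetaEtaQuotient : T ∈ jacobiStabilizer (-1) 1 thetaEtaQuotient := by
  intro τ z
  have hT : ((T • τ : ℍ) : ℂ) = τ + 1 := by
    rw [modular_T_smul, coe_vadd]; push_cast; ring
  have hexp : cexp (π * I / 12) ^ 3 = cexp (π * I / 4) := by
    rw [← Complex.exp_nat_mul]; push_cast; ring_nf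
  rw [thetaEtaQuotient, thetaEtaQuotient, hT, jtheta_add_one, dedekindEta_add_one, mul_pow, hexp,
    mul_div_mul_left _ _ (Complex.exp_ne_zero _)]
  have hj : denom T τ = 1 := by rw [ModularGroup.denom_apply]; simp [ModularGroup.T]
  have hc : T.1 1 0 = 0 := by simp [ModularGroup.T]
  simp [jacobiFactor, hj, hc]

lemma jacobiStabilizer_thetaEtaQuotient : jacobiStabilizer (-1) 1 thetaEtaQuotient = ⊤ := by
  rw [eq_top_iff, ← SpecialLinearGroup.SL2Z_generators, Subgroup.closure_le]
  rintro A (rfl | rfl)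
  · exact S_mem_jacobiStabilizer_thetaEtaQuotient
  · exact T_mem_jacobiStabilizer_thetaEtaQuotient

lemma jtheta_smul (A : SL2Z) (τ : ℍ) (z : ℂ) :
    jtheta (A • τ : ℍ) (z / denom A τ) =
      (dedekindEta (A • τ : ℍ) / dedekindEta τ) ^ 3 * (denom A τ)⁻¹ *
        cexp (π * I * (A.1 1 0 * z ^ 2 / denom A τ)) * jtheta τ z := by
  have hA : A ∈ jacobiStabilizer (-1) 1 thetaEtaQuotient :=
    jacobiStabilizer_thetaEtaQuotient ▸ Subgroup.mem_top A
  have hq := hA τ z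
  rw [thetaEtaQuotient, div_eq_iff (pow_ne_zero 3 (dedekindEta_ne_zero (A • τ).im_pos))] at hq
  rw [hq, jacobiFactor, thetaEtaQuotient, _root_.zpow_neg_one, mul_one]
  ring

end JacobiCocycle

section ThetaProduct

open UpperHalfPlane hiding I

lemma summable_norm_and_hasSum_prod_fin {n : ℕ} {α R : Type*} [NormedCommRing R] [CompleteSpace R]
    {f : Fin n → α → R} (hf : ∀ j, Summable fun a => ‖f j a‖) :
    Summable (fun k : Fin n → α => ‖∏ j, f j (k j)‖) ∧
      HasSum (fun k : Fin n → α => ∏ j, f j (k j)) (∏ j, ∑' a, f j a) := by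
  induction n with
  | zero => exact ⟨Summable.of_finite, by simp⟩
  | succ n ih =>
    obtain ⟨hs, hsum⟩ := ih fun j => hf j.succ
    let e : α × (Fin n → α) ≃ (Fin (n + 1) → α) := Fin.consEquiv fun _ => α
    let g (k : Fin n → α) : R := ∏ j, f j.succ (k j)
    have hprod (x : α × (Fin n → α)) : ∏ j, f j (e x j) = f 0 x.1 * g x.2 :=
      Fin.prod_univ_succ _
    have htsum : ∏ j, ∑' a, f j a = (∑' a, f 0 a) * ∏ j : Fin n, ∑' a, f j.succ a :=
      Fin.prod_univ_succ _
    have hnorm : Summable fun x : α × (Fin n → α) => ‖f 0 x.1 * g x.2‖ := (hf 0).mul_norm hs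
    have hmul : HasSum (fun x : α × (Fin n → α) => f 0 x.1 * g x.2)
        ((∑' a, f 0 a) * ∏ j : Fin n, ∑' a, f j.succ a) :=
      (hf 0).of_norm.hasSum.mul hsum hnorm.of_norm
    rw [← e.summable_iff, ← e.hasSum_iff, htsum]
    simpa only [Function.comp_def, hprod] using And.intro hnorm hmul

lemma hasSum_pi_prod {κ α R : Type*} [Fintype κ] [NormedCommRing R] [CompleteSpace R]
    {f : κ → α → R} (hf : ∀ j, Summable fun a => ‖f j a‖) :
    HasSum (fun n : κ → α => ∏ j, f j (n j)) (∏ j, ∑' a, f j a) := by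
  let e := Fintype.equivFin κ
  have hprod (n : κ → α) : ∏ j, f (e.symm j) (n (e.symm j)) = ∏ j, f j (n j) :=
    e.symm.prod_comp fun j => f j (n j)
  have h := (summable_norm_and_hasSum_prod_fin fun j => hf (e.symm j)).2
  rw [← (e.arrowCongr (Equiv.refl α)).hasSum_iff, e.symm.prod_comp fun j => ∑' a, f j a] at h
  exact h.congr_fun fun n => (hprod n).symm

variable {κ : Type*} [Fintype κ]

/-- The theta series `∏ θ(τ, w_j)` of the lattice `ℤ^κ`; the series of the statement are its
pullbacks along isometries into `ℤ^κ`. -/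
def thetaProd (τ : ℂ) (w : κ → ℂ) : ℂ :=
  ∏ j, jtheta τ (w j)

lemma differentiableAt_thetaProd {p : ℂ × (κ → ℂ)} (hp : 0 < p.1.im) :
    DifferentiableAt ℂ (fun p : ℂ × (κ → ℂ) => thetaProd p.1 p.2) p := by
  have hfactor (j : κ) : DifferentiableAt ℂ (fun p : ℂ × (κ → ℂ) => jtheta p.1 (p.2 j)) p :=
    (differentiableAt_jtheta (p := (p.1, p.2 j)) hp).comp
      (f := fun p : ℂ × (κ → ℂ) => (p.1, p.2 j)) p (by fun_prop)
  exact (HasFDerivAt.finsetProd fun j _ => (hfactor j).hasFDerivAt).differentiableAt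

lemma thetaProd_add_period (τ : ℂ) (w : κ → ℂ) (x y : κ → ℤ) :
    thetaProd τ (fun j => w j + x j * τ + y j) =
      cexp (π * I * (∑ j, (x j + y j) : ℤ) -
        π * I * ((x ⬝ᵥ x : ℤ) * τ + 2 * ((fun j => (x j : ℂ)) ⬝ᵥ w))) * thetaProd τ w := by
  simp only [thetaProd, jtheta_add_period, Finset.prod_mul_distrib, ← Complex.exp_sum]
  congr 2
  simp only [dotProduct]
  push_cast
  simp only [Finset.mul_sum, Finset.sum_mul, ← Finset.sum_add_distrib, ← Finset.sum_sub_distrib]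
  exact Finset.sum_congr rfl fun j _ => by ring

lemma thetaProd_smul (A : SL2Z) (τ : ℍ) (w : κ → ℂ) :
    thetaProd (A • τ : ℍ) (fun j => w j / denom A τ) =
      (dedekindEta (A • τ : ℍ) / dedekindEta τ) ^ (3 * Fintype.card κ) *
        (denom A τ)⁻¹ ^ Fintype.card κ *
        cexp (π * I * (A 1 0 * (w ⬝ᵥ w) / denom A τ)) * thetaProd τ w := by
  simp only [thetaProd, jtheta_smul, Finset.prod_mul_distrib, ← Complex.exp_sum,
    Finset.prod_const, Finset.card_univ, pow_mul, dotProduct, Finset.mul_sum, Finset.sum_div, sq]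

lemma hasSum_thetaProd {τ : ℂ} (hτ : 0 < τ.im) (w : κ → ℂ) :
    HasSum (fun n : κ → ℤ => (∏ j, chi4 (n j)) * cexp (2 * π * I *
        ((n ⬝ᵥ n : ℤ) * τ / 8 + (fun j => (n j : ℂ)) ⬝ᵥ w / 2))) (thetaProd τ w) := by
  refine (hasSum_pi_prod fun j => (hasSum_jtheta hτ (w j)).summable.norm).congr_fun fun n => ?_
  rw [Finset.prod_mul_distrib, ← Complex.exp_sum, ← Finset.mul_sum, Finset.sum_add_distrib]
  simp only [dotProduct, Finset.sum_div, Int.cast_sum, Int.cast_mul, Finset.sum_mul, sq]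

end ThetaProduct

section RootLattice

variable {m : ℕ} {R K : Type*} [CommRing R] [Field K]

/-- The isometric embedding `x ↦ (x₁, …, x_m, x₁ + ⋯ + x_m)` of the root lattice `A_m`, in the
coordinates with Gram matrix `I_m + J_m`, into `ℤ^(m+1)`, and its extensions of scalars. -/
def amEmb (x : Fin m → R) : Fin (m + 1) → R :=
  Fin.snoc (α := fun _ => R) x (∑ i, x i)

/-- The vector `(1, …, 1, -1)` spanning the orthogonal complement of the image of `amEmb`. -/
def amNormal : Fin (m + 1) → R :=
  Fin.snoc (α := fun _ => R) (fun _ => 1) (-1)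

@[simp]
lemma amNormal_castSucc (i : Fin m) : (amNormal i.castSucc : R) = 1 := by
  simp [amNormal]

@[simp]
lemma amNormal_last : (amNormal (Fin.last m) : R) = -1 := by
  simp [amNormal]

/-- The coordinates in `A_m ⊗ K` of the orthogonal projection of `v` to the image of `amEmb`. -/
def amProj (v : Fin (m + 1) → K) : Fin m → K :=
  fun i => v i.castSucc - amNormal ⬝ᵥ v / (m + 1)

@[simp]
lemma amEmb_castSucc (x : Fin m → R) (i : Fin m) : amEmb x i.castSucc = x i := by
  simp [amEmb]

@[simp]
lemma amEmb_last (x : Fin m → R) : amEmb x (Fin.last m) = ∑ i, x i := by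
  simp [amEmb]

lemma intCast_amEmb (x : Fin m → ℤ) (j : Fin (m + 1)) :
    ((amEmb x j : ℤ) : R) = amEmb (fun i => (x i : R)) j := by
  refine j.lastCases ?_ fun i => ?_ <;> simp

lemma amEmb_dotProduct_amEmb (x y : Fin m → R) :
    amEmb x ⬝ᵥ amEmb y = ∑ i, ∑ j, x i * (AmGram m i j : R) * y j := by
  have hentry (i j : Fin m) : x i * (AmGram m i j : R) * y j =
      (if i = j then x i * y j else 0) + x i * y j := by
    by_cases h : i = j
    · simp only [AmGram, of_apply, if_pos h, Int.cast_ofNat]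
      ring
    · simp only [AmGram, of_apply, if_neg h, Int.cast_one]
      ring
  simp [hentry, dotProduct, Fin.sum_univ_castSucc, Finset.sum_add_distrib, Finset.sum_mul_sum]

lemma bilinZ_amGram (x y : Fin m → ℤ) : bilinZ (AmGram m) x y = amEmb x ⬝ᵥ amEmb y := by
  simp [bilinZ, amEmb_dotProduct_amEmb]

lemma bilinQ_amGram (x y : Fin m → ℚ) : bilinQ (AmGram m) x y = amEmb x ⬝ᵥ amEmb y :=
  (amEmb_dotProduct_amEmb x y).symm

lemma bilinC_amGram (x y : Fin m → ℂ) : bilinC (AmGram m) x y = amEmb x ⬝ᵥ amEmb y :=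
  (amEmb_dotProduct_amEmb x y).symm

lemma amNormal_dotProduct (v : Fin (m + 1) → R) :
    amNormal ⬝ᵥ v = ∑ i : Fin m, v i.castSucc - v (Fin.last m) := by
  simp [dotProduct, Fin.sum_univ_castSucc, sub_eq_add_neg]

lemma amNormal_dotProduct_amEmb (x : Fin m → R) : amNormal ⬝ᵥ amEmb x = 0 := by
  simp [amNormal_dotProduct]

lemma amEmb_amProj [CharZero K] (v : Fin (m + 1) → K) :
    amEmb (amProj v) = v - (amNormal ⬝ᵥ v / (m + 1)) • amNormal := by
  have hm : (m + 1 : K) ≠ 0 := m.cast_add_one_ne_zero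
  funext j
  refine j.lastCases ?_ fun i => ?_
  · simp only [amEmb_last, amProj, amNormal_dotProduct, amNormal_last, Finset.sum_sub_distrib,
      Finset.sum_const, Finset.card_univ, Fintype.card_fin, nsmul_eq_mul, Pi.sub_apply,
      Pi.smul_apply, smul_eq_mul]
    field_simp
    ring
  · simp [amProj]

lemma amEmb_amProj_dotProduct_amEmb [CharZero K] (v : Fin (m + 1) → K) (x : Fin m → K) :
    amEmb (amProj v) ⬝ᵥ amEmb x = v ⬝ᵥ amEmb x := by
  rw [amEmb_amProj, sub_dotProduct, smul_dotProduct, amNormal_dotProduct_amEmb, smul_zero, sub_zero]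

lemma amEmb_amProj_dotProduct_self [CharZero K] (v : Fin (m + 1) → K) :
    amEmb (amProj v) ⬝ᵥ amEmb (amProj v) = v ⬝ᵥ v - (amNormal ⬝ᵥ v) ^ 2 / (m + 1) := by
  rw [amEmb_amProj_dotProduct_amEmb, amEmb_amProj, dotProduct_sub, dotProduct_smul,
    dotProduct_comm v amNormal, smul_eq_mul]
  ring

lemma thetaAm_eq_thetaProd (τ : ℂ) (z : Fin m → ℂ) : thetaAm m τ z = thetaProd τ (amEmb z) := by
  simp [thetaAm, thetaProd, Fin.prod_univ_castSucc]

end RootLattice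

section FourierExpansion

lemma hasSum_fiberwise_tsum_mul {α β R : Type*} [NormedDivisionRing R] [CompleteSpace R]
    {c : α → R} {e : β → R} {f : α → β} {s : R} (h : HasSum (fun a => c a * e (f a)) s) :
    HasSum (fun b => (∑' a : f ⁻¹' {b}, c a) * e b) s := by
  refine (h.tsum_fiberwise f).congr_fun fun b => ?_
  rw [← tsum_mul_right]
  exact tsum_congr fun ⟨a, ha⟩ => congrArg (c a * e ·) (Eq.symm ha)

variable {m : ℕ}

/-- The index, in the Fourier expansion of `θ_{A_m}`, to which the term of the lattice vector `n`
of the theta series of `ℤ^(m+1)` contributes. -/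
def fourierIndex (n : Fin (m + 1) → ℤ) : ℚ × (Fin m → ℚ) :=
  ((n ⬝ᵥ n : ℤ) / 8, amProj fun j => (n j : ℚ) / 2)

/-- The Fourier coefficients of `θ_{A_m}`. The sum is finite, since `n ⬝ᵥ n` is constant on the
fibres of `fourierIndex`. -/
def thetaAmCoeff (m : ℕ) (p : ℚ × (Fin m → ℚ)) : ℂ :=
  ∑' n : (fourierIndex (m := m)) ⁻¹' {p}, ∏ j, chi4 (n.1 j)

lemma hyperbolicNorm_fourierIndex (n : Fin (m + 1) → ℤ) :
    2 * (fourierIndex n).1 - bilinQ (AmGram m) (fourierIndex n).2 (fourierIndex n).2 =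
      ((amNormal ⬝ᵥ n : ℤ) : ℚ) ^ 2 / (4 * (m + 1)) := by
  have hhalf : (fun j => (n j : ℚ) / 2) = (2⁻¹ : ℚ) • fun j => (n j : ℚ) := by
    funext j
    simp [div_eq_inv_mul]
  have hself : ((n ⬝ᵥ n : ℤ) : ℚ) = (fun j => (n j : ℚ)) ⬝ᵥ fun j => (n j : ℚ) := by
    simp [dotProduct]
  have hnormal : ((amNormal ⬝ᵥ n : ℤ) : ℚ) = amNormal ⬝ᵥ fun j => (n j : ℚ) := by
    simp [amNormal_dotProduct]
  rw [fourierIndex, bilinQ_amGram, amEmb_amProj_dotProduct_self, hhalf, hself, hnormal]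
  simp only [dotProduct_smul, smul_dotProduct, smul_eq_mul]
  field_simp
  ring

lemma amEmb_fourierIndex (n : Fin (m + 1) → ℤ) (j : Fin (m + 1)) :
    amEmb (fourierIndex n).2 j =
      (n j - ((amNormal ⬝ᵥ n : ℤ) : ℚ) / (m + 1) * (amNormal j : ℤ)) / 2 := by
  have hnormal : amNormal ⬝ᵥ (fun j => (n j : ℚ) / 2) = ((amNormal ⬝ᵥ n : ℤ) : ℚ) / 2 := by
    simp [amNormal_dotProduct, ← Finset.sum_div, sub_div]
  have hcast : ((amNormal j : ℤ) : ℚ) = amNormal j := by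
    refine j.lastCases ?_ fun i => ?_ <;> simp
  rw [fourierIndex, amEmb_amProj, hnormal, hcast, Pi.sub_apply, Pi.smul_apply, smul_eq_mul]
  ring

lemma bilinC_fourierIndex (n : Fin (m + 1) → ℤ) (z : Fin m → ℂ) :
    bilinC (AmGram m) (fun i => ((fourierIndex n).2 i : ℂ)) z =
      (fun j => (n j : ℂ)) ⬝ᵥ amEmb z / 2 := by
  have hcast : (fun i => ((fourierIndex n).2 i : ℂ)) = amProj fun j => (n j : ℂ) / 2 := by
    funext i
    simp [fourierIndex, amProj, amNormal_dotProduct]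
  rw [hcast, bilinC_amGram, amEmb_amProj_dotProduct_amEmb]
  simp only [dotProduct, Finset.sum_div, div_mul_eq_mul_div]

lemma inHalfDual_fourierIndex (n : Fin (m + 1) → ℤ) :
    InHalfDual (AmGram m) (fourierIndex n).2 := by
  intro x
  refine ⟨n ⬝ᵥ amEmb x, ?_⟩
  rw [bilinQ_amGram, fourierIndex, amEmb_amProj_dotProduct_amEmb]
  simp only [dotProduct, Int.cast_sum, Int.cast_mul, intCast_amEmb, Finset.mul_sum]
  exact Finset.sum_congr rfl fun j _ => by ring

lemma hasSum_thetaAmCoeff {τ : ℂ} (hτ : 0 < τ.im) (z : Fin m → ℂ) :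
    HasSum (fun p : ℚ × (Fin m → ℚ) => thetaAmCoeff m p * cexp (2 * π * I *
        (p.1 * τ + bilinC (AmGram m) (fun i => (p.2 i : ℂ)) z))) (thetaAm m τ z) := by
  rw [thetaAm_eq_thetaProd]
  let e (p : ℚ × (Fin m → ℚ)) : ℂ :=
    cexp (2 * π * I * (p.1 * τ + bilinC (AmGram m) (fun i => (p.2 i : ℂ)) z))
  have he (n : Fin (m + 1) → ℤ) : e (fourierIndex n) =
      cexp (2 * π * I * ((n ⬝ᵥ n : ℤ) * τ / 8 + (fun j => (n j : ℂ)) ⬝ᵥ amEmb z / 2)) := by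
    simp only [e, bilinC_fourierIndex]
    simp [fourierIndex, div_mul_eq_mul_div]
  have h : HasSum (fun n : Fin (m + 1) → ℤ => (∏ j, chi4 (n j)) * e (fourierIndex n))
      (thetaProd τ (amEmb z)) := by
    simpa only [he] using hasSum_thetaProd hτ (amEmb z)
  exact (hasSum_fiberwise_tsum_mul (e := e) h :)

lemma exists_odd_of_thetaAmCoeff_ne_zero {p : ℚ × (Fin m → ℚ)} (hp : thetaAmCoeff m p ≠ 0) :
    ∃ n : Fin (m + 1) → ℤ, fourierIndex n = p ∧ ∀ j, Odd (n j) := by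
  contrapose! hp
  refine (tsum_congr fun ⟨n, hn⟩ => ?_).trans tsum_zero
  obtain ⟨j, hj⟩ := hp n hn
  refine Finset.prod_eq_zero (Finset.mem_univ j) (not_ne_iff.mp ?_)
  rwa [chi4_ne_zero_iff_odd]

lemma odd_amNormal_dotProduct (hm : Even m) {n : Fin (m + 1) → ℤ} (hn : ∀ j, Odd (n j)) :
    Odd (amNormal ⬝ᵥ n) := by
  have hsum : ((∑ i : Fin m, n i.castSucc : ℤ) : ZMod 2) = m := by
    simp [ZMod.intCast_eq_one_iff_odd.mpr (hn _)]
  rw [amNormal_dotProduct]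
  refine Even.sub_odd ?_ (hn _)
  rw [← ZMod.intCast_eq_zero_iff_even, hsum, ZMod.natCast_eq_zero_iff_even]
  exact hm

lemma le_hyperbolicNorm_of_thetaAmCoeff_ne_zero (hm : Even m) {p : ℚ × (Fin m → ℚ)}
    (hp : thetaAmCoeff m p ≠ 0) :
    1 / (4 * (m + 1)) ≤ 2 * p.1 - bilinQ (AmGram m) p.2 p.2 := by
  obtain ⟨n, rfl, hn⟩ := exists_odd_of_thetaAmCoeff_ne_zero hp
  have hne : amNormal ⬝ᵥ n ≠ 0 := fun h => by
    simpa [h] using odd_amNormal_dotProduct hm hn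
  have hsq : 1 ≤ (amNormal ⬝ᵥ n) ^ 2 := Order.one_le_iff_pos.mpr (sq_pos_of_ne_zero hne)
  rw [hyperbolicNorm_fourierIndex]
  gcongr
  exact_mod_cast hsq

lemma eq_of_fourierIndex_eq {n n' : Fin (m + 1) → ℤ} (h : fourierIndex n = fourierIndex n')
    (hdvd : ¬ (m + 1 : ℤ) ∣ 2 * (amNormal ⬝ᵥ n')) : n = n' := by
  have hsq : (amNormal ⬝ᵥ n) ^ 2 = (amNormal ⬝ᵥ n') ^ 2 := by
    have hnorm := hyperbolicNorm_fourierIndex n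
    rw [h, hyperbolicNorm_fourierIndex, div_left_inj' (by positivity)] at hnorm
    exact_mod_cast hnorm.symm
  have hcoord (j : Fin (m + 1)) :
      (m + 1) * (n j - n' j) = (amNormal ⬝ᵥ n - amNormal ⬝ᵥ n') * amNormal j := by
    have hn := amEmb_fourierIndex n j
    have hn' := amEmb_fourierIndex n' j
    rw [h, hn'] at hn
    field_simp at hn
    qify
    linear_combination -hn
  rcases sq_eq_sq_iff_eq_or_eq_neg.mp hsq with heq | hneg
  · funext j
    have hj := hcoord j
    rw [heq, sub_self, zero_mul] at hj
    exact sub_eq_zero.mp ((mul_eq_zero.mp hj).resolve_left (by positivity))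
  · refine absurd ⟨n (Fin.last m) - n' (Fin.last m), ?_⟩ hdvd
    rw [hcoord, hneg, amNormal_last]
    ring

/-- The vector `(1, …, 1, m - 1)`; for even `m` it is odd and its Fourier index has the smallest
possible hyperbolic norm. -/
def minimalVector (m : ℕ) : Fin (m + 1) → ℤ :=
  Fin.snoc (α := fun _ => ℤ) (fun _ => 1) (m - 1)

lemma amNormal_dotProduct_minimalVector : amNormal ⬝ᵥ minimalVector m = 1 := by
  simp [amNormal_dotProduct, minimalVector]

lemma odd_minimalVector (hm : Even m) (j : Fin (m + 1)) : Odd (minimalVector m j) := by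
  have hlast : Odd (m - 1 : ℤ) := ((Int.even_coe_nat m).mpr hm).sub_odd odd_one
  refine j.lastCases ?_ fun i => ?_ <;> simp [minimalVector, hlast]

lemma thetaAmCoeff_fourierIndex_minimalVector_ne_zero (hm₂ : 2 ≤ m) (hm : Even m) :
    thetaAmCoeff m (fourierIndex (minimalVector m)) ≠ 0 := by
  have hdvd : ¬ (m + 1 : ℤ) ∣ 2 * (amNormal ⬝ᵥ minimalVector m) := fun h => by
    rw [amNormal_dotProduct_minimalVector] at h
    have := Int.le_of_dvd (by norm_num) h
    omega
  have hfibre (n : fourierIndex ⁻¹' {fourierIndex (minimalVector m)}) :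
      n = ⟨minimalVector m, rfl⟩ :=
    Subtype.ext (eq_of_fourierIndex_eq n.2 hdvd)
  rw [thetaAmCoeff, tsum_eq_single ⟨minimalVector m, rfl⟩ fun n hn => absurd (hfibre n) hn]
  exact Finset.prod_ne_zero_iff.mpr fun j _ => chi4_ne_zero_iff_odd.mpr (odd_minimalVector hm j)

end FourierExpansion

section JacobiForm

open UpperHalfPlane hiding I

variable {m : ℕ}

lemma thetaAm_smul (A : SL2Z) (τ : ℍ) (z : Fin m → ℂ) :
    thetaAm m (A • τ : ℍ) (fun i => z i / denom A τ) =
      (dedekindEta (A • τ : ℍ) / dedekindEta τ) ^ (3 * m + 3) * (denom A τ)⁻¹ ^ (m + 1) *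
        cexp (π * I * (A.1 1 0 * bilinC (AmGram m) z z / denom A τ)) * thetaAm m τ z := by
  have hemb : amEmb (fun i => z i / denom A τ) = fun j => amEmb z j / denom A τ := by
    funext j
    refine j.lastCases ?_ fun i => ?_ <;> simp [Finset.sum_div]
  rw [thetaAm_eq_thetaProd, thetaAm_eq_thetaProd, hemb, thetaProd_smul, Fintype.card_fin,
    bilinC_amGram, mul_add_one]

lemma thetaAm_moebius {τ : ℂ} (hτ : 0 < τ.im) (A : SL2Z) (z : Fin m → ℂ) :
    thetaAm m ((A.1 0 0 * τ + A.1 0 1) / (A.1 1 0 * τ + A.1 1 1))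
        (fun i => z i / (A.1 1 0 * τ + A.1 1 1)) =
      (dedekindEta ((A.1 0 0 * τ + A.1 0 1) / (A.1 1 0 * τ + A.1 1 1)) / dedekindEta τ) ^
          (3 * m + 3) * (A.1 1 0 * τ + A.1 1 1 : ℂ)⁻¹ ^ (m + 1) *
        cexp (π * I * (A.1 1 0 * bilinC (AmGram m) z z / (A.1 1 0 * τ + A.1 1 1))) *
          thetaAm m τ z := by
  have hθ := thetaAm_smul A ⟨τ, hτ⟩ z
  rw [coe_specialLinearGroup_apply, ModularGroup.denom_apply] at hθ
  exact hθ

lemma thetaAm_add_period (τ : ℂ) (z : Fin m → ℂ) (x y : Fin m → ℤ) :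
    thetaAm m τ (fun i => z i + x i * τ + y i) =
      cexp (-(π * I) * (bilinZ (AmGram m) x x * τ +
        2 * bilinC (AmGram m) (fun i => (x i : ℂ)) z)) * thetaAm m τ z := by
  have hemb : amEmb (fun i => z i + x i * τ + y i) =
      fun j => amEmb z j + (amEmb x j : ℤ) * τ + (amEmb y j : ℤ) := by
    funext j
    refine j.lastCases ?_ fun i => ?_ <;> simp [Finset.sum_add_distrib, Finset.sum_mul]
  have hsum : (∑ j, (amEmb x j + amEmb y j) : ℤ) = 2 * ∑ i, (x i + y i) := by
    simp only [Fin.sum_univ_castSucc, amEmb_castSucc, amEmb_last, Finset.sum_add_distrib]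
    ring
  rw [thetaAm_eq_thetaProd, thetaAm_eq_thetaProd, hemb, thetaProd_add_period, hsum,
    bilinZ_amGram, bilinC_amGram]
  simp only [intCast_amEmb]
  congr 1
  refine exp_eq_exp_iff_exists_int.mpr ⟨∑ i, (x i + y i), ?_⟩
  push_cast
  ring

lemma differentiableAt_thetaAm {p : ℂ × (Fin m → ℂ)} (hp : 0 < p.1.im) :
    DifferentiableAt ℂ (fun p : ℂ × (Fin m → ℂ) => thetaAm m p.1 p.2) p := by
  have hemb : Differentiable ℂ fun z : Fin m → ℂ => amEmb z := by
    refine differentiable_pi.mpr fun j => ?_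
    refine j.lastCases ?_ fun i => ?_
    · simp only [amEmb_last]
      fun_prop
    · simp only [amEmb_castSucc]
      fun_prop
  simp only [thetaAm_eq_thetaProd]
  exact (differentiableAt_thetaProd (p := (p.1, amEmb p.2)) hp).comp
    (f := fun p : ℂ × (Fin m → ℂ) => (p.1, amEmb p.2)) p (by fun_prop)

lemma isJacobiForm_thetaAm {vη : SL2Z → ℂ}
    (hvη : ∀ A : SL2Z, ∀ τ : ℂ, 0 < τ.im →
      dedekindEta ((A.1 0 0 * τ + A.1 0 1) / (A.1 1 0 * τ + A.1 1 1)) ^ (3 * m + 3) =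
        vη A * (A.1 1 0 * τ + A.1 1 1) ^ (((3 * m + 3 : ℕ) : ℂ) / 2) *
          dedekindEta τ ^ (3 * m + 3)) :
    IsJacobiForm (AmGram m) (((m : ℚ) + 1) / 2) 1 vη (fun _ _ => 1) (thetaAmCoeff m)
      (thetaAm m) where
  holo p hp := (differentiableAt_thetaAm hp).differentiableWithinAt
  modular A τ hτ z := by
    have hη : dedekindEta τ ^ (3 * m + 3) ≠ 0 := pow_ne_zero _ (dedekindEta_ne_zero hτ)
    have hj : (A.1 1 0 * τ + A.1 1 1 : ℂ) ≠ 0 := denom_ne_zero A ⟨τ, hτ⟩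
    have hcpow : (A.1 1 0 * τ + A.1 1 1 : ℂ) ^ (((3 * m + 3 : ℕ) : ℂ) / 2) =
        (A.1 1 0 * τ + A.1 1 1) ^ ((((m : ℚ) + 1) / 2 : ℚ) : ℂ) *
          (A.1 1 0 * τ + A.1 1 1) ^ (m + 1) := by
      rw [← cpow_natCast, ← cpow_add _ _ hj]
      push_cast
      ring_nf
    rw [thetaAm_moebius hτ, div_pow, hvη A τ hτ, hcpow, inv_pow, Rat.cast_one, mul_one]
    field_simp [hη, hj]
  elliptic x y τ _ z := by simp [thetaAm_add_period]
  support p hp := by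
    obtain ⟨n, rfl, -⟩ := exists_odd_of_thetaAmCoeff_ne_zero hp
    have hn : 0 ≤ n ⬝ᵥ n := Finset.sum_nonneg fun j _ => mul_self_nonneg (n j)
    refine ⟨div_nonneg (mod_cast hn) (by norm_num), inHalfDual_fourierIndex n, ?_⟩
    rw [mul_one, hyperbolicNorm_fourierIndex]
    positivity
  expansion τ hτ z := hasSum_thetaAmCoeff hτ z

end JacobiForm

/-- For even `m ≥ 2`, the theta-product `θ_{A_m}` is a holomorphic Jacobi
form of weight `(m+1)/2` and index `1` for the lattice `A_m` (Gram matrix `I_m+J_m`) with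
multiplier system `v_η^{3m+3}`, and it is a cusp form of critical weight of order exactly
`1/(4(m+1))`. -/
theorem statement14 (m : ℕ) (hm : 2 ≤ m) (hmeven : Even m)
    (vη : SL2Z → ℂ)
    (hvη : ∀ A : SL2Z, ∀ τ : ℂ, 0 < τ.im →
      dedekindEta (((A.1 0 0 : ℂ) * τ + (A.1 0 1 : ℂ))
            / ((A.1 1 0 : ℂ) * τ + (A.1 1 1 : ℂ))) ^ (3 * m + 3)
        = vη A * ((A.1 1 0 : ℂ) * τ + (A.1 1 1 : ℂ)) ^ (((3 * m + 3 : ℕ) : ℂ) / 2)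
          * dedekindEta τ ^ (3 * m + 3)) :
    ∃ g : ℚ × (Fin m → ℚ) → ℂ,
      IsJacobiForm (AmGram m) (((m : ℚ) + 1) / 2) 1 vη (fun _ _ => 1) g (thetaAm m) ∧
      (∀ p, g p ≠ 0 →
        1 / (4 * ((m : ℚ) + 1)) ≤ 2 * p.1 - bilinQ (AmGram m) p.2 p.2) ∧
      (∃ p, g p ≠ 0 ∧
        2 * p.1 - bilinQ (AmGram m) p.2 p.2 = 1 / (4 * ((m : ℚ) + 1))) := by
  refine ⟨thetaAmCoeff m, isJacobiForm_thetaAm hvη,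
    fun p hp => le_hyperbolicNorm_of_thetaAmCoeff_ne_zero hmeven hp,
    fourierIndex (minimalVector m),
    thetaAmCoeff_fourierIndex_minimalVector_ne_zero hm hmeven, ?_⟩
  rw [hyperbolicNorm_fourierIndex, amNormal_dotProduct_minimalVector, Int.cast_one, one_pow]
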